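/- arXiv:1806.07137 — 4 statements merged into one kernel-verified Lean document; each statement's English description precedes it below -/
import Mathlib

section
/- For every real h > 0, every real s < 1, and every natural number n ≥ 1, ∏_{i=0}^{n−1} (1 − r_h^{(i)}(s)·(1 − exp(−h))) = 1 − s·(1 − exp(−n·h)). -/
/-- The map `r_h(s) = s·exp(−h) / (1 − s·(1 − exp(−h)))`. -/
noncomputable def r (h : ℝ) (s : ℝ) : ℝ :=
  s * Real.exp (-h) / (1 - s * (1 - Real.exp (-h)))

lemma r_aux_pos (q s : ℝ) (hq : 0 < q) (hq1 : q < 1) (hs : s < 1) (k : ℕ) :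
    0 < 1 - s * (1 - q ^ k) := by
  have h1 : 0 < q ^ k := pow_pos hq k
  have h2 : q ^ k ≤ 1 := pow_le_one₀ hq.le hq1.le
  nlinarith [mul_nonneg (sub_nonneg.2 hs.le) (sub_nonneg.2 h2)]

lemma r_aux_iter (h : ℝ) (hh : 0 < h) (s : ℝ) (hs : s < 1) (k : ℕ) :
    (r h)^[k] s = s * Real.exp (-h) ^ k / (1 - s * (1 - Real.exp (-h) ^ k)) := by
  have hq : 0 < Real.exp (-h) := Real.exp_pos _
  have hq1 : Real.exp (-h) < 1 := Real.exp_lt_one_iff.2 (by linarith)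
  induction k with
  | zero => simp
  | succ k ih =>
    rw [Function.iterate_succ_apply', ih, r]
    generalize Real.exp (-h) = q at *
    have a := (r_aux_pos q s hq hq1 hs k).ne'
    have b := (r_aux_pos q s hq hq1 hs (k + 1)).ne'
    have e : 1 - s * q ^ k / (1 - s * (1 - q ^ k)) * (1 - q)
        = (1 - s * (1 - q ^ (k + 1))) / (1 - s * (1 - q ^ k)) := by
      rw [eq_div_iff a, sub_mul, mul_right_comm, div_mul_cancel₀ _ a]
      ring
    rw [e, div_mul_eq_mul_div, div_div_div_cancel_right₀ a]
    ring

/-- `∏_{i=0}^{n−1} (1 − r_h^{(i)}(s)·(1 − exp(−h))) = 1 − s·(1 − exp(−n·h))`. -/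
theorem prod_one_sub_iterate_r (h : ℝ) (hh : 0 < h) (s : ℝ) (hs : s < 1)
    (n : ℕ) (hn : 1 ≤ n) :
    ∏ i ∈ Finset.range n, (1 - (r h)^[i] s * (1 - Real.exp (-h))) =
      1 - s * (1 - Real.exp (-(n : ℝ) * h)) := by
  have hq : 0 < Real.exp (-h) := Real.exp_pos _
  have hq1 : Real.exp (-h) < 1 := Real.exp_lt_one_iff.2 (by linarith)
  have e : Real.exp (-(n : ℝ) * h) = Real.exp (-h) ^ n := by
    rw [← Real.exp_nat_mul]
    ring_nf
  rw [e]
  clear e hn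
  induction n with
  | zero => simp
  | succ k ih =>
    rw [Finset.prod_range_succ, ih, r_aux_iter h hh s hs k]
    generalize Real.exp (-h) = q at *
    have a := (r_aux_pos q s hq hq1 hs k).ne'
    rw [mul_sub, ← mul_assoc, mul_comm (1 - s * (1 - q ^ k)) (_ / _), div_mul_cancel₀ _ a]
    ring
end

section
/- For every real h > 0, every real s < 1, and every natural number m, 1 − r_h^{(m)}(s)·(1 − exp(−h)) = (1 − s·(1 − exp(−(m+1)·h))) / (1 − s·(1 − exp(−m·h))). -/
theorem r_denom_pos (q s : ℝ) (hq : 0 < q) (hq1 : q ≤ 1) (hs : s < 1) (k : ℕ) :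
    0 < 1 - s * (1 - q ^ k) := by
  have h1 : 0 < q ^ k := pow_pos hq k
  have h2 : q ^ k ≤ 1 := pow_le_one₀ hq.le hq1
  nlinarith [mul_nonneg (sub_nonneg.2 hs.le) (sub_nonneg.2 h2)]

theorem r_iterate (h : ℝ) (hh : 0 < h) (s : ℝ) (hs : s < 1) (m : ℕ) :
    (r h)^[m] s = s * Real.exp (-h) ^ m / (1 - s * (1 - Real.exp (-h) ^ m)) := by
  have hq : 0 < Real.exp (-h) := Real.exp_pos _
  have hq1 : Real.exp (-h) ≤ 1 := Real.exp_le_one_iff.2 (by linarith)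
  induction m with
  | zero => simp
  | succ k ih =>
    rw [Function.iterate_succ_apply', ih, r]
    have a := r_denom_pos _ s hq hq1 hs k
    have b := r_denom_pos _ s hq hq1 hs (k + 1)
    generalize Real.exp (-h) = q at *
    have e : 1 - s * q ^ k / (1 - s * (1 - q ^ k)) * (1 - q) =
        (1 - s * (1 - q ^ (k + 1))) / (1 - s * (1 - q ^ k)) := by
      rw [eq_div_iff a.ne', sub_mul, mul_right_comm, div_mul_cancel₀ _ a.ne']
      ring
    rw [e, div_mul_eq_mul_div, div_div_div_cancel_right₀ a.ne']
    ring

/-- `1 − r_h^{(m)}(s)·(1 − exp(−h))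
      = (1 − s·(1 − exp(−(m+1)·h))) / (1 − s·(1 − exp(−m·h)))`. -/
theorem one_sub_iterate_r_eq_div (h : ℝ) (hh : 0 < h) (s : ℝ) (hs : s < 1) (m : ℕ) :
    1 - (r h)^[m] s * (1 - Real.exp (-h)) =
      (1 - s * (1 - Real.exp (-((m : ℝ) + 1) * h))) /
        (1 - s * (1 - Real.exp (-(m : ℝ) * h))) := by
  have hq : 0 < Real.exp (-h) := Real.exp_pos _
  have hq1 : Real.exp (-h) ≤ 1 := Real.exp_le_one_iff.2 (by linarith)
  have a := r_denom_pos _ s hq hq1 hs m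
  have e1 : Real.exp (-(m : ℝ) * h) = Real.exp (-h) ^ m := by
    rw [← Real.exp_nat_mul]; congr 1; ring
  have e2 : Real.exp (-((m : ℝ) + 1) * h) = Real.exp (-h) ^ (m + 1) := by
    rw [← Real.exp_nat_mul]; congr 1; push_cast; ring
  rw [r_iterate h hh s hs, e1, e2, eq_div_iff a.ne', sub_mul, mul_right_comm,
    div_mul_cancel₀ _ a.ne']
  ring
end

section
/- Let h > 0, a ∈ ℝ, θ₀ ∈ ℝ, and M ≥ 1 a natural number. Then for every real s < 1, [∏_{m=1}^{M} (1 − r_h^{(m−1)}(s)·(1 − exp(−h)))^{−a}] · exp(θ₀·r_h^{(M)}(s)) = (1 − s·(1 − exp(−M·h)))^{−a} · exp(θ₀·s·exp(−M·h) / (1 − s·(1 − exp(−M·h)))). (This is the closed form of the moment generating function of the exact CIR process with stationary distribution Gamma(a,1), started at θ₀ and run for time M·h.) -/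
theorem cir_den_pos (q s : ℝ) (hq0 : 0 < q) (hq1 : q < 1) (hs : s < 1) (k : ℕ) :
    0 < 1 - s * (1 - q ^ k) := by
  have h1 : 0 < q ^ k := pow_pos hq0 k
  have h2 : q ^ k ≤ 1 := pow_le_one₀ hq0.le hq1.le
  nlinarith [mul_nonneg (sub_nonneg.2 hs.le) (sub_nonneg.2 h2)]

theorem cir_step (q s : ℝ) (hq0 : 0 < q) (hq1 : q < 1) (hs : s < 1) (k : ℕ) :
    1 - s * q ^ k / (1 - s * (1 - q ^ k)) * (1 - q) =
      (1 - s * (1 - q ^ (k + 1))) / (1 - s * (1 - q ^ k)) := by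
  have hk := (cir_den_pos q s hq0 hq1 hs k).ne'
  rw [eq_div_iff hk, sub_mul, mul_right_comm, div_mul_cancel₀ _ hk]
  ring

theorem cir_iter (h s : ℝ) (hh : 0 < h) (hs : s < 1) (k : ℕ) :
    (r h)^[k] s = s * Real.exp (-h) ^ k / (1 - s * (1 - Real.exp (-h) ^ k)) := by
  have hq0 := Real.exp_pos (-h)
  have hq1 : Real.exp (-h) < 1 := Real.exp_lt_one_iff.2 (by linarith)
  induction k with
  | zero => simp
  | succ k ih =>
    have hk := (cir_den_pos _ s hq0 hq1 hs k).ne'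
    rw [Function.iterate_succ_apply', ih, r, cir_step _ s hq0 hq1 hs k,
      div_mul_eq_mul_div, div_div_div_cancel_right₀ hk, pow_succ, mul_assoc]

theorem cir_prod (h s a : ℝ) (hh : 0 < h) (hs : s < 1) (M : ℕ) :
    (∏ m ∈ Finset.Icc 1 M, (1 - (r h)^[m - 1] s * (1 - Real.exp (-h))) ^ (-a)) =
      (1 - s * (1 - Real.exp (-h) ^ M)) ^ (-a) := by
  have hq0 := Real.exp_pos (-h)
  have hq1 : Real.exp (-h) < 1 := Real.exp_lt_one_iff.2 (by linarith)
  induction M with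
  | zero => simp
  | succ k ih =>
    have hk := cir_den_pos _ s hq0 hq1 hs k
    have hk1 := cir_den_pos _ s hq0 hq1 hs (k + 1)
    rw [Finset.prod_Icc_succ_top (by omega), ih, Nat.add_sub_cancel, cir_iter h s hh hs,
      cir_step _ s hq0 hq1 hs k, ← Real.mul_rpow hk.le (div_pos hk1 hk).le,
      mul_div_cancel₀ _ (ne_of_gt hk)]

/-- Closed form of the MGF of the exact CIR process with stationary
distribution `Gamma(a,1)`, started at `θ₀` and run for time `M·h`. -/
theorem cir_mgf_closed_form (h : ℝ) (hh : 0 < h) (a θ₀ : ℝ)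
    (M : ℕ) (hM : 1 ≤ M) (s : ℝ) (hs : s < 1) :
    (∏ m ∈ Finset.Icc 1 M,
        (1 - (r h)^[m - 1] s * (1 - Real.exp (-h))) ^ (-a)) *
      Real.exp (θ₀ * (r h)^[M] s) =
    (1 - s * (1 - Real.exp (-(M : ℝ) * h))) ^ (-a) *
      Real.exp (θ₀ * s * Real.exp (-(M : ℝ) * h) /
        (1 - s * (1 - Real.exp (-(M : ℝ) * h)))) := by
  have he : Real.exp (-(M : ℝ) * h) = Real.exp (-h) ^ M := by
    rw [← Real.exp_nat_mul]
    congr 1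
    ring
  rw [cir_prod h s a hh hs, cir_iter h s hh hs, he, mul_assoc θ₀, mul_div_assoc θ₀]
end

section
/- Let h > 0, a ∈ ℝ, θ₀ ∈ ℝ. Define μ_m = θ₀·exp(−m·h) + a·(1 − exp(−m·h)), and define the sequence (v_m) by v₀ = 0 and v_{m+1} = exp(−2h)·v_m + a·(1 − exp(−h))² + 2·μ_m·exp(−h)·(1 − exp(−h)). Then for every natural number M, v_M = 2·θ₀·(exp(−M·h) − exp(−2M·h)) + a·(1 − exp(−M·h))². (This is the variance Var[θ_M] of the CIR process started at θ₀ with stationary distribution Gamma(a,1), run for time M·h, as stated in Corollary 1 of the paper; the recursion is the law-of-total-variance recursion implied by the conditional mean and variance of the CIR transition.) -/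
/-- The variance `Var[θ_M]` of the CIR process started at `θ₀` with stationary
distribution `Gamma(a,1)`, run for time `M·h` (Corollary 1 of the paper): with
`μ_m = θ₀·exp(−m·h) + a·(1 − exp(−m·h))`, `v₀ = 0` and the law-of-total-variance
recursion `v_{m+1} = exp(−2h)·v_m + a·(1 − exp(−h))² + 2·μ_m·exp(−h)·(1 − exp(−h))`,
one has `v_M = 2·θ₀·(exp(−M·h) − exp(−2M·h)) + a·(1 − exp(−M·h))²`. -/
theorem cir_variance (h : ℝ) (hh : 0 < h) (a θ₀ : ℝ) (μ v : ℕ → ℝ)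
    (hμ : ∀ m : ℕ, μ m = θ₀ * Real.exp (-(m : ℝ) * h) + a * (1 - Real.exp (-(m : ℝ) * h)))
    (hv0 : v 0 = 0)
    (hvrec : ∀ m : ℕ, v (m + 1) = Real.exp (-(2 * h)) * v m +
      a * (1 - Real.exp (-h)) ^ 2 + 2 * μ m * Real.exp (-h) * (1 - Real.exp (-h))) :
    ∀ M : ℕ, v M = 2 * θ₀ * (Real.exp (-(M : ℝ) * h) - Real.exp (-(2 * (M : ℝ)) * h)) +
      a * (1 - Real.exp (-(M : ℝ) * h)) ^ 2 := by
  intro M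
  have e2 : ∀ x : ℝ, Real.exp (-(2 * x)) = Real.exp (-x) ^ 2 := by
    intro x
    rw [← Real.exp_nat_mul]
    congr 1
    push_cast
    ring
  have e3 : ∀ m : ℕ, Real.exp (-(2 * (m : ℝ)) * h) = Real.exp (-(m : ℝ) * h) ^ 2 := by
    intro m
    rw [← Real.exp_nat_mul]
    congr 1
    push_cast
    ring
  induction M with
  | zero => simp [hv0]
  | succ m ih =>
    have e1 : Real.exp (-((m + 1 : ℕ) : ℝ) * h) = Real.exp (-(m : ℝ) * h) * Real.exp (-h) := by
      rw [← Real.exp_add]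
      congr 1
      push_cast
      ring
    rw [hvrec, ih, hμ, e3, e3, e1, e2]
    ring
end
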